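/- For n ≥ 3, Pval(L^n) ≤ 4·(λ/Δ)², where Δ is the largest eigenvalue and λ the spectral parameter of the adjacency matrix of the bipartite graph B_{n,2} whose vertex set is L^n_n ∪ L^n_2 with x ∈ L^n_n adjacent to t ∈ L^n_2 iff t ⊊ x. -/

import Mathlib

open Finset

abbrev F2 := ZMod 2
/-- `F2^{2n}`, split into the first and last `n` coordinates. -/
abbrev PV (n : ℕ) := (Fin n → F2) × (Fin n → F2)

/-- Symplectic product on `F2^{2n}`: zero iff `a₁·b₂ = a₂·b₁`. -/
def symp {n : ℕ} (a b : PV n) : F2 :=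
  (∑ i, a.1 i * b.2 i) + (∑ i, a.2 i * b.1 i)

/-- A subspace is isotropic if the symplectic product vanishes on it. -/
def IsIsotropic {n : ℕ} (S : Submodule F2 (PV n)) : Prop :=
  ∀ x ∈ S, ∀ y ∈ S, symp x y = 0

/-- `Lset n k` = `L^n_k`, the set of `k`-dimensional isotropic subspaces of `F2^{2n}`. -/
def Lset (n k : ℕ) : Set (Submodule F2 (PV n)) :=
  {S | IsIsotropic S ∧ Module.finrank F2 S = k}

/-- Integer lift of a vector over `F2`, with values in `{0,1} ⊆ ℤ`. -/
def liftZ {n : ℕ} (v : Fin n → F2) : Fin n → ℤ := fun i => ((v i).val : ℤ)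

def dotZ {n : ℕ} (a b : Fin n → ℤ) : ℤ := ∑ i, a i * b i

/-- The phase `i^{x̂₁·x̂₂} · i^{ŷ₁·ŷ₂} · i^{−((x+y)^^₁·(x+y)^^₂)} · (−1)^{x̂₂·ŷ₁}`. -/
noncomputable def phase {n : ℕ} (x y : PV n) : ℂ :=
  Complex.I ^ (dotZ (liftZ x.1) (liftZ x.2)) *
  Complex.I ^ (dotZ (liftZ y.1) (liftZ y.2)) *
  Complex.I ^ (-(dotZ (liftZ (x + y).1) (liftZ (x + y).2))) *
  (-1 : ℂ) ^ (dotZ (liftZ x.2) (liftZ y.1))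

/-- `w(x,y) ∈ {0,1} ⊆ F2`: zero iff the phase equals `1`. -/
noncomputable def wght {n : ℕ} (x y : PV n) : F2 :=
  if phase x y = 1 then 0 else 1

/-- An outcome of an isotropic subspace `S` is `f : S → F2` with
`f(x+y) = f(x)+f(y)+w(x,y)`. -/
def IsOutcome {n : ℕ} (S : Submodule F2 (PV n)) (f : S → F2) : Prop :=
  ∀ x y : S, f (x + y) = f x + f y + wght (x : PV n) (y : PV n)

/-- Two outcomes are consistent if they agree on the intersection of their domains. -/
def ConsistentOn {n : ℕ} {S₁ S₂ : Submodule F2 (PV n)} (f₁ : S₁ → F2) (f₂ : S₂ → F2) : Prop :=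
  ∀ v (h1 : v ∈ S₁) (h2 : v ∈ S₂), f₁ ⟨v, h1⟩ = f₂ ⟨v, h2⟩

open scoped Classical

noncomputable instance {n : ℕ} : Fintype (Submodule F2 (PV n)) := by
  have : Finite (Submodule F2 (PV n)) :=
    Finite.of_injective (fun S => (S : Set (PV n))) SetLike.coe_injective
  exact Fintype.ofFinite _

/-- Adjacency matrix (over `ℝ`) of the graph with adjacency relation `Adj`. -/
noncomputable def adjMat {V : Type*} [Fintype V] (Adj : V → V → Prop) : Matrix V V ℝ :=
  fun x y => if Adj x y then 1 else 0

/-- The set of eigenvalues of a matrix. -/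
def eigSet {V : Type*} [Fintype V] (A : Matrix V V ℝ) : Set ℝ :=
  {μ | ∃ v : V → ℝ, v ≠ 0 ∧ A.mulVec v = μ • v}

/-- The largest eigenvalue. -/
noncomputable def maxEig {V : Type*} [Fintype V] (A : Matrix V V ℝ) : ℝ :=
  sSup (eigSet A)

/-- The spectral parameter: the second largest element of `{|μ| : μ ∈ Spec(A)}`. -/
noncomputable def specParam {V : Type*} [Fintype V] (A : Matrix V V ℝ) : ℝ :=
  sSup ((abs '' eigSet A) \ {sSup (abs '' eigSet A)})

/-- Vertices of the bipartite graph `B_{n,2}`: `L^n_n ∪ L^n_2`. -/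
abbrev BVtx (n : ℕ) := {S : Submodule F2 (PV n) // S ∈ Lset n n ∪ Lset n 2}

/-- Adjacency in `B_{n,2}`: `x ∈ L^n_n` is adjacent to `t ∈ L^n_2` iff `t ⊊ x`. -/
def BAdj {n : ℕ} (x y : BVtx n) : Prop :=
  (x.1 ∈ Lset n 2 ∧ y.1 ∈ Lset n n ∧ x.1 < y.1) ∨
  (y.1 ∈ Lset n 2 ∧ x.1 ∈ Lset n n ∧ y.1 < x.1)

/-- The adjacency matrix of `B_{n,2}`. -/
noncomputable def adjB (n : ℕ) : Matrix (BVtx n) (BVtx n) ℝ := adjMat BAdj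

/-!
Consistent outcomes on `D` glue to one function `F` on `F2^{2n}` which restricts to an outcome on
every plane below an element of `D`. In `B_{n,2}` there are thus no edges between `D` and the set of
bad planes, those to which `F` does not restrict as an outcome. A connected biregular bipartite
graph satisfies an expander mixing inequality: if no edges join vertex sets of densities `α` and
`β` on the two sides, then `αβΔ² ≤ λ²(1 - α)(1 - β)`. It remains to show `β ≥ 1/5`.

The phases around a Mermin square multiply to `-1`, so at least one of its six lines spans a bad
plane. Five vectors with pairwise symplectic product `1` and zero sum generate a configuration of
fifteen lines, permuted by `S₅`. Since it contains a Mermin square, and the stabilizer of a line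
has order `8`, at least `24` of the `120` permutations move a given line to a bad one. Every
isotropic plane lies in the same number of such configurations, so at least a fifth of all planes
are bad.
-/

/-! ### Spectra of symmetric matrices -/

section Spectrum

open Matrix

variable {V : Type*} [Fintype V] {A B : Matrix V V ℝ}

theorem dotProduct_sq_le (v w : V → ℝ) : (v ⬝ᵥ w) ^ 2 ≤ (v ⬝ᵥ v) * (w ⬝ᵥ w) := by
  simpa only [dotProduct, sq] using sum_mul_sq_le_sq_mul_sq univ v w

theorem finite_eigSet (A : Matrix V V ℝ) : (eigSet A).Finite := by
  refine (Module.End.finite_hasEigenvalue (Matrix.toLin' A)).subset ?_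
  rintro μ ⟨v, hv, hAv⟩
  exact Module.End.hasEigenvalue_of_hasEigenvector ⟨Module.End.mem_eigenspace_iff.2 hAv, hv⟩

theorem abs_le_specParam {μ : ℝ} (hμ : μ ∈ eigSet A) (hne : |μ| ≠ sSup (abs '' eigSet A)) :
    |μ| ≤ specParam A :=
  le_csSup (((finite_eigSet A).image abs).bddAbove.mono Set.sdiff_subset)
    ⟨Set.mem_image_of_mem _ hμ, hne⟩

theorem sum_eigenvectorBasis_dotProduct_sq (hA : A.IsHermitian) (v : V → ℝ) :
    ∑ i, ((hA.eigenvectorBasis i).ofLp ⬝ᵥ v) ^ 2 = v ⬝ᵥ v := by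
  have parseval := hA.eigenvectorBasis.sum_sq_norm_inner_right (WithLp.toLp 2 v)
  simpa [EuclideanSpace.norm_sq_eq, PiLp.inner_apply, dotProduct, mul_comm, ← sq] using parseval

theorem mulVec_dotProduct_mulVec_le (hA : A.IsHermitian) {u : V → ℝ}
    (hu : ∀ μ v, A *ᵥ v = μ • v → |μ| = sSup (abs '' eigSet A) → v ⬝ᵥ u = 0) :
    (A *ᵥ u) ⬝ᵥ (A *ᵥ u) ≤ specParam A ^ 2 * (u ⬝ᵥ u) := by
  rw [← sum_eigenvectorBasis_dotProduct_sq hA, ← sum_eigenvectorBasis_dotProduct_sq hA u, mul_sum]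
  refine sum_le_sum fun i _ => ?_
  have hv : A *ᵥ (hA.eigenvectorBasis i).ofLp
      = hA.eigenvalues i • (hA.eigenvectorBasis i).ofLp := hA.mulVec_eigenvectorBasis i
  set v := (hA.eigenvectorBasis i).ofLp
  have hvu : v ⬝ᵥ (A *ᵥ u) = hA.eigenvalues i * (v ⬝ᵥ u) := by
    have hAt : Aᵀ = A := by simpa using hA.eq
    rw [dotProduct_mulVec, ← mulVec_transpose, hAt, hv, smul_dotProduct, smul_eq_mul]
  by_cases hi : |hA.eigenvalues i| = sSup (abs '' eigSet A)
  · simp [hvu, hu _ v hv hi]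
  · have hv0 : v ≠ 0 := fun h =>
      hA.eigenvectorBasis.orthonormal.ne_zero i (WithLp.ofLp_injective 2 h)
    have hle := abs_le_specParam ⟨v, hv0, hv⟩ hi
    rw [hvu, mul_pow, ← sq_abs (hA.eigenvalues i)]
    gcongr

theorem sum_sum_mul_sub_sq (hB : B.IsSymm) {e : ℝ} (he : B *ᵥ 1 = e • 1) (v : V → ℝ) :
    ∑ x, ∑ y, B x y * (v x - v y) ^ 2 = 2 * (e * (v ⬝ᵥ v) - v ⬝ᵥ (B *ᵥ v)) := by
  have row_sum (x : V) : ∑ y, B x y = e := by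
    simpa [mulVec, dotProduct] using congrFun he x
  have sq_left : ∑ x, ∑ y, B x y * v x ^ 2 = e * (v ⬝ᵥ v) := by
    rw [dotProduct, mul_sum]
    exact sum_congr rfl fun x _ => by rw [← sum_mul, row_sum, sq]
  have sq_right : ∑ x, ∑ y, B x y * v y ^ 2 = e * (v ⬝ᵥ v) := by
    rw [← sq_left, sum_comm]
    exact sum_congr rfl fun x _ => sum_congr rfl fun y _ => by rw [hB.apply]
  have cross : ∑ x, ∑ y, B x y * (v x * v y) = v ⬝ᵥ (B *ᵥ v) := by
    refine sum_congr rfl fun x _ => ?_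
    rw [mulVec, dotProduct, mul_sum]
    exact sum_congr rfl fun y _ => by ring
  calc ∑ x, ∑ y, B x y * (v x - v y) ^ 2
      = ∑ x, ∑ y, B x y * v x ^ 2 + ∑ x, ∑ y, B x y * v y ^ 2
          - 2 * ∑ x, ∑ y, B x y * (v x * v y) := by
        simp only [mul_sum, ← sum_add_distrib, ← sum_sub_distrib]
        exact sum_congr rfl fun x _ => sum_congr rfl fun y _ => by ring
    _ = 2 * (e * (v ⬝ᵥ v) - v ⬝ᵥ (B *ᵥ v)) := by
        rw [sq_left, sq_right, cross]
        ring

theorem eigenvalue_le_of_mulVec_one (hB : B.IsSymm) (hB0 : ∀ x y, 0 ≤ B x y) {e μ : ℝ}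
    (he : B *ᵥ 1 = e • 1) {v : V → ℝ} (hv0 : v ≠ 0) (hv : B *ᵥ v = μ • v) : μ ≤ e := by
  have hpos : 0 < v ⬝ᵥ v := lt_of_le_of_ne (sum_nonneg fun x _ => mul_self_nonneg (v x))
    fun h => hv0 (dotProduct_self_eq_zero.1 h.symm)
  have hsum := sum_sum_mul_sub_sq hB he v
  have hnonneg : 0 ≤ ∑ x, ∑ y, B x y * (v x - v y) ^ 2 :=
    sum_nonneg fun x _ => sum_nonneg fun y _ => mul_nonneg (hB0 x y) (sq_nonneg _)
  rw [hsum, hv, dotProduct_smul, smul_eq_mul, ← sub_mul] at hnonneg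
  exact sub_nonneg.1 (nonneg_of_mul_nonneg_left (by linarith) hpos)

theorem apply_eq_of_mulVec_eq_smul (hB : B.IsSymm) (hB0 : ∀ x y, 0 ≤ B x y) {e : ℝ}
    (he : B *ᵥ 1 = e • 1) {v : V → ℝ} (hv : B *ᵥ v = e • v) {x y : V} (hxy : B x y ≠ 0) :
    v x = v y := by
  have hsum := sum_sum_mul_sub_sq hB he v
  rw [hv, dotProduct_smul, smul_eq_mul, sub_self, mul_zero,
    sum_eq_zero_iff_of_nonneg fun x _ =>
      sum_nonneg fun y _ => mul_nonneg (hB0 x y) (sq_nonneg _)] at hsum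
  have hterm := (sum_eq_zero_iff_of_nonneg fun y _ => mul_nonneg (hB0 x y) (sq_nonneg _)).1
    (hsum x (mem_univ x)) y (mem_univ y)
  exact sub_eq_zero.1 (pow_eq_zero_iff two_ne_zero |>.1 ((mul_eq_zero.1 hterm).resolve_left hxy))

end Spectrum

section Indicator

open Matrix

variable {V : Type*} [DecidableEq V]

/-- The indicator vector of a set of vertices. -/
noncomputable def indVec (S : Finset V) : V → ℝ := fun x => if x ∈ S then 1 else 0

variable [Fintype V]

theorem indVec_dotProduct (S : Finset V) (v : V → ℝ) : indVec S ⬝ᵥ v = ∑ x ∈ S, v x := by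
  simp [indVec, dotProduct]

theorem indVec_dotProduct_indVec (S T : Finset V) : indVec S ⬝ᵥ indVec T = #(S ∩ T) := by
  simp [indVec_dotProduct, indVec, Finset.sum_ite_mem]

/-- The deviation of the indicator of `S` from its mean over `L`, scaled by `#L` to avoid
dividing. -/
noncomputable def deviation (L S : Finset V) : V → ℝ :=
  (#L : ℝ) • indVec S - (#S : ℝ) • indVec L

theorem deviation_dotProduct_deviation {L S : Finset V} (hS : S ⊆ L) :
    deviation L S ⬝ᵥ deviation L S = #L * #S * (#L - #S) := by
  simp only [deviation, dotProduct_sub, sub_dotProduct, smul_dotProduct, dotProduct_smul,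
    indVec_dotProduct_indVec, inter_self, inter_eq_left.2 hS, inter_eq_right.2 hS, smul_eq_mul]
  ring

theorem dotProduct_deviation_eq_zero {L S : Finset V} (hS : S ⊆ L) {v : V → ℝ} {c : ℝ}
    (hv : ∀ x ∈ L, v x = c) : v ⬝ᵥ deviation L S = 0 := by
  rw [deviation, dotProduct_sub, dotProduct_smul, dotProduct_smul, dotProduct_comm v,
    dotProduct_comm v, indVec_dotProduct, indVec_dotProduct, sum_congr rfl hv,
    sum_congr rfl fun x hx => hv x (hS hx)]
  simp only [sum_const, nsmul_eq_mul, smul_eq_mul]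
  ring

end Indicator

/-! ### Expander mixing in biregular graphs -/

section Biregular

open Matrix

variable {V : Type*}

theorem apply_eq_of_isBipartiteWith {G : SimpleGraph V} (hG : G.Preconnected) {s t : Set V}
    (hst : G.IsBipartiteWith s t) {α : Type*} {ψ : V → α}
    (hψ : ∀ ⦃x y z⦄, G.Adj z x → G.Adj z y → ψ x = ψ y) {x y : V} (hx : x ∈ s) (hy : y ∈ s) :
    ψ x = ψ y := by
  suffices h : (x ∈ s → ψ x = ψ y) ∧ (x ∈ t → ∀ z, G.Adj x z → ψ z = ψ y) from h.1 hx
  clear hx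
  obtain ⟨p⟩ := hG x y
  induction p with
  | nil => exact ⟨fun _ => rfl, fun ht => (Set.disjoint_left.1 hst.disjoint hy ht).elim⟩
  | cons huv _ ih =>
    refine ⟨fun hu => ?_, fun hu z huz => ?_⟩
    · exact (ih hy).2 (hst.mem_of_mem_adj hu huv) _ huv.symm
    · exact (hψ huz huv).trans ((ih hy).1 (hst.symm.mem_of_mem_adj hu huv))

variable [Fintype V]

/-- `G` is bipartite with sides `L` and `Lᶜ`, each vertex of `L` having degree `a` and each vertex
of `Lᶜ` having degree `b`. -/
structure IsBiregularWith [DecidableEq V] (G : SimpleGraph V) [DecidableRel G.Adj]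
    (L : Finset V) (a b : ℕ) : Prop where
  isBipartiteWith : G.IsBipartiteWith (L : Set V) (Lᶜ : Finset V)
  degree_left : ∀ x ∈ L, G.degree x = a
  degree_right : ∀ x ∈ Lᶜ, G.degree x = b

variable {G : SimpleGraph V} [DecidableRel G.Adj]

theorem adjMatrix_mulVec_indVec [DecidableEq V] (S : Finset V) (x : V) :
    (G.adjMatrix ℝ *ᵥ indVec S) x = #(G.neighborFinset x ∩ S) := by
  simp [SimpleGraph.adjMatrix_mulVec_apply, indVec]

theorem isSymm_adjMatrix_mul_self : (G.adjMatrix ℝ * G.adjMatrix ℝ).IsSymm := by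
  rw [IsSymm, transpose_mul, SimpleGraph.transpose_adjMatrix]

theorem adjMatrix_mul_self_nonneg (x y : V) : 0 ≤ (G.adjMatrix ℝ * G.adjMatrix ℝ) x y := by
  simp only [mul_apply, SimpleGraph.adjMatrix_apply]
  positivity

theorem adjMatrix_mul_self_ne_zero {x y z : V} (hx : G.Adj z x) (hy : G.Adj z y) :
    (G.adjMatrix ℝ * G.adjMatrix ℝ) x y ≠ 0 := by
  have : 0 < #{w ∈ G.neighborFinset y | G.Adj x w} :=
    card_pos.2 ⟨z, by simpa using ⟨hy.symm, hx.symm⟩⟩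
  simpa [SimpleGraph.adjMatrix_mul_apply, SimpleGraph.adjMatrix_apply] using this.ne'

theorem dotProduct_adjMatrix_mulVec (v w : V → ℝ) :
    v ⬝ᵥ (G.adjMatrix ℝ *ᵥ w) = (G.adjMatrix ℝ *ᵥ v) ⬝ᵥ w := by
  rw [dotProduct_mulVec, ← mulVec_transpose, SimpleGraph.transpose_adjMatrix]

theorem indVec_dotProduct_adjMatrix_mulVec_indVec [DecidableEq V] {S T : Finset V}
    (hST : ∀ x ∈ S, ∀ y ∈ T, ¬ G.Adj x y) : indVec T ⬝ᵥ (G.adjMatrix ℝ *ᵥ indVec S) = 0 := by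
  rw [indVec_dotProduct]
  refine sum_eq_zero fun y hy => ?_
  rw [adjMatrix_mulVec_indVec, Nat.cast_eq_zero, card_eq_zero, ← disjoint_iff_inter_eq_empty,
    disjoint_left]
  exact fun x hyx hx => hST x hx y hy ((G.mem_neighborFinset y x).1 hyx).symm

theorem indVec_add_indVec_compl [DecidableEq V] (L : Finset V) : indVec L + indVec Lᶜ = 1 := by
  ext x
  by_cases hx : x ∈ L <;> simp [indVec, hx]

namespace IsBiregularWith

variable [DecidableEq V] {L S T : Finset V} {a b : ℕ}

protected theorem symm (h : IsBiregularWith G L a b) : IsBiregularWith G Lᶜ b a where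
  isBipartiteWith := by simpa using h.isBipartiteWith.symm
  degree_left := h.degree_right
  degree_right := by simpa using h.degree_left

theorem card_left_mul (h : IsBiregularWith G L a b) : #L * a = #Lᶜ * b := by
  have := SimpleGraph.isBipartiteWith_sum_degrees_eq h.isBipartiteWith
  rwa [sum_congr rfl h.degree_left, sum_congr rfl h.degree_right, sum_const, sum_const,
    smul_eq_mul, smul_eq_mul] at this

theorem adjMatrix_mulVec_indVec_left (h : IsBiregularWith G L a b) :
    G.adjMatrix ℝ *ᵥ indVec L = (b : ℝ) • indVec Lᶜ := by
  ext x
  rw [adjMatrix_mulVec_indVec]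
  by_cases hx : x ∈ L
  · have hdisj := SimpleGraph.isBipartiteWith_neighborFinset_disjoint h.isBipartiteWith hx
    simp [indVec, hx, disjoint_iff_inter_eq_empty.1 hdisj]
  · have hxc : x ∈ Lᶜ := mem_compl.2 hx
    have hsub := SimpleGraph.isBipartiteWith_neighborFinset_subset' h.isBipartiteWith hxc
    simp [indVec, hx, inter_eq_left.2 hsub, h.degree_right x hxc]

theorem adjMatrix_mulVec_indVec_right (h : IsBiregularWith G L a b) :
    G.adjMatrix ℝ *ᵥ indVec Lᶜ = (a : ℝ) • indVec L := by
  simpa using h.symm.adjMatrix_mulVec_indVec_left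

theorem adjMatrix_mul_self_mulVec_one (h : IsBiregularWith G L a b) :
    (G.adjMatrix ℝ * G.adjMatrix ℝ) *ᵥ 1 = (a * b : ℝ) • 1 := by
  simp only [← mulVec_mulVec, ← indVec_add_indVec_compl L, mulVec_add, mulVec_smul,
    h.adjMatrix_mulVec_indVec_left, h.adjMatrix_mulVec_indVec_right]
  module

theorem abs_eigenvalue_le (h : IsBiregularWith G L a b) {μ : ℝ}
    (hμ : μ ∈ eigSet (G.adjMatrix ℝ)) : |μ| ≤ √(a * b) := by
  obtain ⟨v, hv0, hv⟩ := hμ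
  have hsq : (G.adjMatrix ℝ * G.adjMatrix ℝ) *ᵥ v = μ ^ 2 • v := by
    rw [← mulVec_mulVec, hv, mulVec_smul, hv, smul_smul, sq]
  exact Real.abs_le_sqrt (eigenvalue_le_of_mulVec_one isSymm_adjMatrix_mul_self
    adjMatrix_mul_self_nonneg h.adjMatrix_mul_self_mulVec_one hv0 hsq)

theorem sqrt_mem_eigSet (h : IsBiregularWith G L a b) (hL : L.Nonempty) (ha : 0 < a) :
    √(a * b) ∈ eigSet (G.adjMatrix ℝ) := by
  refine ⟨√a • indVec L + √b • indVec Lᶜ, fun h0 => ?_, ?_⟩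
  · obtain ⟨x, hx⟩ := hL
    have := congrFun h0 x
    simp [indVec, hx, ha.ne'] at this
  · have ha2 : √a * √b * √a = √b * a := by
      rw [mul_right_comm, Real.mul_self_sqrt a.cast_nonneg, mul_comm]
    have hb2 : √a * √b * √b = √a * b := by
      rw [mul_assoc, Real.mul_self_sqrt b.cast_nonneg]
    rw [mulVec_add, mulVec_smul, mulVec_smul, h.adjMatrix_mulVec_indVec_left,
      h.adjMatrix_mulVec_indVec_right, smul_add, Real.sqrt_mul a.cast_nonneg, smul_smul,
      smul_smul, smul_smul, smul_smul, ha2, hb2, add_comm]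

theorem maxEig_eq (h : IsBiregularWith G L a b) (hL : L.Nonempty) (ha : 0 < a) :
    maxEig (G.adjMatrix ℝ) = √(a * b) :=
  IsGreatest.csSup_eq ⟨h.sqrt_mem_eigSet hL ha,
    fun _ hμ => (le_abs_self _).trans (h.abs_eigenvalue_le hμ)⟩

theorem sSup_abs_eigSet_eq (h : IsBiregularWith G L a b) (hL : L.Nonempty) (ha : 0 < a) :
    sSup (abs '' eigSet (G.adjMatrix ℝ)) = √(a * b) :=
  IsGreatest.csSup_eq ⟨⟨_, h.sqrt_mem_eigSet hL ha, abs_of_nonneg (Real.sqrt_nonneg _)⟩,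
    Set.forall_mem_image.2 fun _ hμ => h.abs_eigenvalue_le hμ⟩

theorem eigenvector_constant_left (h : IsBiregularWith G L a b) (hG : G.Preconnected) {μ : ℝ}
    {v : V → ℝ} (hv : G.adjMatrix ℝ *ᵥ v = μ • v) (hμ : |μ| = √(a * b)) {x y : V} (hx : x ∈ L)
    (hy : y ∈ L) : v x = v y := by
  have hsq : (G.adjMatrix ℝ * G.adjMatrix ℝ) *ᵥ v = (a * b : ℝ) • v := by
    rw [← mulVec_mulVec, hv, mulVec_smul, hv, smul_smul, ← abs_mul_abs_self, hμ,
      Real.mul_self_sqrt (by positivity)]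
  exact apply_eq_of_isBipartiteWith hG h.isBipartiteWith (fun x y z hzx hzy =>
    apply_eq_of_mulVec_eq_smul isSymm_adjMatrix_mul_self adjMatrix_mul_self_nonneg
      h.adjMatrix_mul_self_mulVec_one hsq (adjMatrix_mul_self_ne_zero hzx hzy)) hx hy

theorem deviation_dotProduct_adjMatrix_mulVec_deviation (h : IsBiregularWith G L a b)
    (hS : S ⊆ L) (hT : T ⊆ Lᶜ) (hST : ∀ x ∈ S, ∀ y ∈ T, ¬ G.Adj x y) :
    deviation Lᶜ T ⬝ᵥ (G.adjMatrix ℝ *ᵥ deviation L S) = -(#L * a * #S * #T : ℝ) := by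
  have hRS : indVec Lᶜ ⬝ᵥ (G.adjMatrix ℝ *ᵥ indVec S) = a * #S := by
    rw [dotProduct_adjMatrix_mulVec, h.adjMatrix_mulVec_indVec_right, smul_dotProduct,
      indVec_dotProduct_indVec, inter_eq_right.2 hS, smul_eq_mul]
  simp only [deviation, mulVec_sub, mulVec_smul, dotProduct_sub, sub_dotProduct, smul_dotProduct,
    dotProduct_smul, h.adjMatrix_mulVec_indVec_left, hRS, indVec_dotProduct_indVec, inter_self,
    indVec_dotProduct_adjMatrix_mulVec_indVec hST, inter_eq_left.2 hT, smul_eq_mul]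
  ring

theorem mulVec_deviation_le (h : IsBiregularWith G L a b) (hG : G.Preconnected)
    (hL : L.Nonempty) (ha : 0 < a) (hS : S ⊆ L) :
    (G.adjMatrix ℝ *ᵥ deviation L S) ⬝ᵥ (G.adjMatrix ℝ *ᵥ deviation L S)
      ≤ specParam (G.adjMatrix ℝ) ^ 2 * (#L * #S * (#L - #S)) := by
  obtain ⟨x, hx⟩ := hL
  rw [← deviation_dotProduct_deviation hS]
  refine mulVec_dotProduct_mulVec_le (A := G.adjMatrix ℝ) G.isSymm_adjMatrix fun μ v hv hμ => ?_
  rw [h.sSup_abs_eigSet_eq ⟨x, hx⟩ ha] at hμ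
  exact dotProduct_deviation_eq_zero hS fun y hy => h.eigenvector_constant_left hG hv hμ hy hx

theorem card_mul_card_mul_maxEig_sq_le (h : IsBiregularWith G L a b) (hG : G.Preconnected)
    (hL : L.Nonempty) (ha : 0 < a) (hS : S ⊆ L) (hT : T ⊆ Lᶜ)
    (hST : ∀ x ∈ S, ∀ y ∈ T, ¬ G.Adj x y) :
    #S * #T * maxEig (G.adjMatrix ℝ) ^ 2
      ≤ specParam (G.adjMatrix ℝ) ^ 2 * ((#L - #S) * (#Lᶜ - #T)) := by
  have hsL : (#S : ℝ) ≤ #L := mod_cast card_le_card hS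
  have htR : (#T : ℝ) ≤ #Lᶜ := mod_cast card_le_card hT
  have rhs_nonneg : 0 ≤ specParam (G.adjMatrix ℝ) ^ 2 * ((#L - #S) * (#Lᶜ - #T)) :=
    mul_nonneg (sq_nonneg _) (mul_nonneg (sub_nonneg.2 hsL) (sub_nonneg.2 htR))
  obtain hs | hs := (#S).cast_nonneg (α := ℝ) |>.eq_or_lt
  · simpa [← hs] using rhs_nonneg
  obtain ht | ht := (#T).cast_nonneg (α := ℝ) |>.eq_or_lt
  · simpa [← ht] using rhs_nonneg
  have hcount : (#L * a : ℝ) = #Lᶜ * b := mod_cast h.card_left_mul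
  have cauchy_schwarz := dotProduct_sq_le (deviation Lᶜ T) (G.adjMatrix ℝ *ᵥ deviation L S)
  rw [h.deviation_dotProduct_adjMatrix_mulVec_deviation hS hT hST,
    deviation_dotProduct_deviation hT] at cauchy_schwarz
  rw [h.maxEig_eq hL ha, Real.sq_sqrt (by positivity)]
  have hpos : (0 : ℝ) < #L * #S * (#Lᶜ * #T) := by
    have := hs.trans_le hsL
    have := ht.trans_le htR
    positivity
  refine le_of_mul_le_mul_left ?_ hpos
  calc (#L * #S * (#Lᶜ * #T) * (#S * #T * (a * b)) : ℝ)
      = (-(#L * a * #S * #T)) ^ 2 := by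
        linear_combination (-(#L * a * #S ^ 2 * #T ^ 2 : ℝ)) * hcount
    _ ≤ _ := cauchy_schwarz
    _ ≤ _ := mul_le_mul_of_nonneg_left (h.mulVec_deviation_le hG hL ha hS)
        (mul_nonneg (by positivity) (sub_nonneg.2 htR))
    _ = _ := by ring

theorem card_div_card_le (h : IsBiregularWith G L a b) (hG : G.Preconnected) (hL : L.Nonempty)
    (ha : 0 < a) (hS : S ⊆ L) (hT : T ⊆ Lᶜ) (hST : ∀ x ∈ S, ∀ y ∈ T, ¬ G.Adj x y) {c : ℕ}
    (hc : #Lᶜ ≤ (c + 1) * #T) :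
    (#S / #L : ℝ) ≤ c * (specParam (G.adjMatrix ℝ) / maxEig (G.adjMatrix ℝ)) ^ 2 := by
  have hLpos : (0 : ℝ) < #L := mod_cast hL.card_pos
  have hRb : 0 < #Lᶜ * b := h.card_left_mul ▸ Nat.mul_pos hL.card_pos ha
  have hb : 0 < b := Nat.pos_of_mul_pos_left hRb
  have hTpos : (0 : ℝ) < #T := by
    exact_mod_cast Nat.pos_of_mul_pos_left ((Nat.pos_of_mul_pos_right hRb).trans_le hc)
  have hΔ : 0 < maxEig (G.adjMatrix ℝ) := by
    rw [h.maxEig_eq hL ha]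
    positivity
  have hcT : (#Lᶜ - #T : ℝ) ≤ c * #T := by
    have : (#Lᶜ : ℝ) ≤ (c + 1) * #T := mod_cast hc
    linarith
  rw [div_pow, mul_div_assoc', div_le_div_iff₀ hLpos (by positivity)]
  refine le_of_mul_le_mul_right ?_ hTpos
  calc #S * maxEig (G.adjMatrix ℝ) ^ 2 * #T
      = #S * #T * maxEig (G.adjMatrix ℝ) ^ 2 := by ring
    _ ≤ specParam (G.adjMatrix ℝ) ^ 2 * ((#L - #S) * (#Lᶜ - #T)) :=
        h.card_mul_card_mul_maxEig_sq_le hG hL ha hS hT hST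
    _ ≤ specParam (G.adjMatrix ℝ) ^ 2 * (#L * (c * #T)) := by
        gcongr
        · exact sub_nonneg.2 (mod_cast card_le_card hT)
        · exact sub_le_self _ (Nat.cast_nonneg _)
    _ = c * specParam (G.adjMatrix ℝ) ^ 2 * #L * #T := by ring

end IsBiregularWith

end Biregular

/-! ### Isotropic subspaces -/

section Subspaces

open Module

variable {K V : Type*} [DivisionRing K] [AddCommGroup V] [Module K V]

theorem exists_le_finrank_eq {X : Submodule K V} {j : ℕ} (hj : j ≤ finrank K X) :
    ∃ t ≤ X, finrank K t = j := by
  obtain ⟨v, hv⟩ := exists_linearIndependent_of_le_finrank hj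
  refine ⟨(Submodule.span K (Set.range v)).map X.subtype, X.map_subtype_le _, ?_⟩
  rw [Submodule.finrank_map_subtype_eq, finrank_span_eq_card hv, Fintype.card_fin]

theorem natCard_le_finrank_eq [FiniteDimensional K V] {X Y : Submodule K V}
    (h : finrank K X = finrank K Y) (j : ℕ) :
    Nat.card {t : Submodule K V // t ≤ X ∧ finrank K t = j}
      = Nat.card {t : Submodule K V // t ≤ Y ∧ finrank K t = j} := by
  have inside (Z : Submodule K V) : Nat.card {t : Submodule K V // t ≤ Z ∧ finrank K t = j}
      = Nat.card {t : Submodule K Z // finrank K t = j} :=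
    Nat.card_congr
      { toFun t := ⟨t.1.submoduleOf Z, by
          rw [(Submodule.submoduleOfEquivOfLe t.2.1).finrank_eq, t.2.2]⟩
        invFun t := ⟨t.1.map Z.subtype, Z.map_subtype_le _, by
          rw [Submodule.finrank_map_subtype_eq, t.2]⟩
        left_inv t := Subtype.ext (Submodule.map_comap_eq_of_le (by simpa using t.2.1))
        right_inv t := Subtype.ext (Submodule.comap_map_eq_of_injective Z.subtype_injective _) }
  let e : X ≃ₗ[K] Y := LinearEquiv.ofFinrankEq _ _ h
  rw [inside, inside]
  exact Nat.card_congr ((Submodule.orderIsoMapComap e).toEquiv.subtypeEquiv fun t => by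
    rw [RelIso.coe_fn_toEquiv, Submodule.orderIsoMapComap_apply, LinearEquiv.finrank_map_eq])

end Subspaces

section Symplectic

open Module

variable {n : ℕ}

theorem symp_comm (a b : PV n) : symp a b = symp b a := by
  simp only [symp, add_comm (∑ i, a.1 i * b.2 i), mul_comm]

theorem symp_add_left (a b c : PV n) : symp (a + b) c = symp a c + symp b c := by
  simp only [symp, Prod.fst_add, Prod.snd_add, Pi.add_apply, add_mul, sum_add_distrib]
  ring

theorem symp_add_right (a b c : PV n) : symp a (b + c) = symp a b + symp a c := by
  simp only [symp_comm a, symp_add_left]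

theorem symp_smul_left (r : F2) (a b : PV n) : symp (r • a) b = r • symp a b := by
  simp [symp, mul_add, mul_sum, mul_assoc]

theorem symp_smul_right (r : F2) (a b : PV n) : symp a (r • b) = r • symp a b := by
  simp only [symp_comm a, symp_smul_left]

theorem symp_self (a : PV n) : symp a a = 0 := by
  simp only [symp, mul_comm (a.2 _)]
  exact CharTwo.add_self_eq_zero _

/-- The symplectic product as a bilinear form. -/
def sympForm (n : ℕ) : LinearMap.BilinForm F2 (PV n) :=
  LinearMap.mk₂ F2 symp symp_add_left symp_smul_left symp_add_right symp_smul_right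

theorem sympForm_apply (a b : PV n) : sympForm n a b = symp a b := rfl

theorem nondegenerate_sympForm : (sympForm n).Nondegenerate := by
  have separating (a : PV n) (ha : ∀ b, symp a b = 0) : a = 0 := by
    ext i
    · simpa [symp, Pi.single_apply] using ha (0, Pi.single i 1)
    · simpa [symp, Pi.single_apply] using ha (Pi.single i 1, 0)
  exact ⟨separating, fun a ha => separating a fun b => by rw [symp_comm]; exact ha b⟩

/-- The symplectic complement of a subspace. -/
def perp (S : Submodule F2 (PV n)) : Submodule F2 (PV n) := (sympForm n).orthogonal S

theorem mem_perp {S : Submodule F2 (PV n)} {v : PV n} : v ∈ perp S ↔ ∀ x ∈ S, symp x v = 0 :=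
  Iff.rfl

theorem mem_perp_span {s : Set (PV n)} {v : PV n} :
    v ∈ perp (Submodule.span F2 s) ↔ ∀ x ∈ s, symp x v = 0 := by
  refine ⟨fun h x hx => h x (Submodule.subset_span hx), fun h => mem_perp.2 ?_⟩
  have : Submodule.span F2 s ≤ LinearMap.ker ((sympForm n).flip v) := Submodule.span_le.2 h
  exact fun x hx => this hx

theorem finrank_perp (S : Submodule F2 (PV n)) :
    finrank F2 (perp S) = 2 * n - finrank F2 S := by
  rw [perp, LinearMap.BilinForm.finrank_orthogonal nondegenerate_sympForm]
  simp [two_mul]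

theorem card_mem_submodule (S : Submodule F2 (PV n)) : #{v | v ∈ S} = 2 ^ finrank F2 S := by
  rw [← Fintype.card_subtype, ← Nat.card_eq_fintype_card,
    Module.natCard_eq_pow_finrank (K := F2) (V := S), Nat.card_zmod]

theorem card_symp_eq {k : ℕ} {v : Fin k → PV n} (hv : LinearIndependent F2 v) (c : Fin k → F2) :
    #{f | ∀ i, symp (v i) f = c i} = 2 ^ (2 * n - k) := by
  obtain ⟨φ, hφ⟩ := ((Basis.span hv).constr F2 c).exists_extend
  have hφv (i : Fin k) : φ (v i) = c i := by
    rw [← (Basis.span hv).constr_basis F2 c i, ← hφ, Basis.span_apply]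
    rfl
  obtain ⟨f₀, rfl⟩ := ((sympForm n).toDual nondegenerate_sympForm).surjective φ
  have hf₀ (i : Fin k) : sympForm n (v i) f₀ = c i := by
    rw [sympForm_apply, symp_comm, ← hφv i, LinearMap.BilinForm.toDual_def, sympForm_apply]
  have translate : #{f | ∀ i, symp (v i) f = c i}
      = #{f | f ∈ perp (Submodule.span F2 (Set.range v))} := by
    refine card_equiv (Equiv.subRight f₀) fun f => ?_
    rw [mem_filter_univ, mem_filter_univ, Equiv.subRight_apply, mem_perp_span,
      Set.forall_mem_range]
    simp only [← sympForm_apply, map_sub, hf₀, sub_eq_zero]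
  rw [translate, card_mem_submodule, finrank_perp, finrank_span_eq_card hv, Fintype.card_fin]

theorem IsIsotropic.mono {S T : Submodule F2 (PV n)} (hT : IsIsotropic T) (h : S ≤ T) :
    IsIsotropic S :=
  fun x hx y hy => hT x (h hx) y (h hy)

theorem isIsotropic_iff_le_perp {S : Submodule F2 (PV n)} : IsIsotropic S ↔ S ≤ perp S :=
  ⟨fun h y hy x hx => h x hx y hy, fun h x hx _ hy => h hy x hx⟩

theorem IsIsotropic.finrank_le {S : Submodule F2 (PV n)} (hS : IsIsotropic S) :
    finrank F2 S ≤ n := by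
  have := Submodule.finrank_mono (isIsotropic_iff_le_perp.1 hS)
  rw [finrank_perp] at this
  omega

theorem isIsotropic_span {s : Set (PV n)} (hs : ∀ x ∈ s, ∀ y ∈ s, symp x y = 0) :
    IsIsotropic (Submodule.span F2 s) :=
  isIsotropic_iff_le_perp.2
    (Submodule.span_le.2 fun y hy => mem_perp_span.2 fun x hx => hs x hx y hy)

theorem isIsotropic_span_pair {x y : PV n} (hxy : symp x y = 0) :
    IsIsotropic (Submodule.span F2 {x, y}) :=
  isIsotropic_span (by simp [symp_self, hxy, symp_comm y x])

theorem IsIsotropic.sup_span_singleton {S : Submodule F2 (PV n)} (hS : IsIsotropic S) {v : PV n}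
    (hv : v ∈ perp S) : IsIsotropic (S ⊔ Submodule.span F2 {v}) := by
  rw [← S.span_eq, ← Submodule.span_union]
  refine isIsotropic_span ?_
  rintro x (hx | rfl) y (hy | rfl)
  · exact hS x hx y hy
  · exact hv x hx
  · rw [symp_comm]
    exact hv y hy
  · exact symp_self _

theorem card_mem_sdiff {S X : Submodule F2 (PV n)} (h : S ≤ X) :
    #{v | v ∈ X ∧ v ∉ S} = 2 ^ finrank F2 X - 2 ^ finrank F2 S := by
  rw [filter_and_not, card_sdiff_of_subset (monotone_filter_right _ fun _ _ hv => h hv),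
    card_mem_submodule, card_mem_submodule]

theorem card_lagrangian_ge_mul {S : Submodule F2 (PV n)} (hS : IsIsotropic S) {r : ℕ}
    (hr : ∀ v ∈ perp S, v ∉ S → #{X | X ∈ Lset n n ∧ S ⊔ Submodule.span F2 {v} ≤ X} = r) :
    #{X | X ∈ Lset n n ∧ S ≤ X} * (2 ^ n - 2 ^ finrank F2 S)
      = (2 ^ (2 * n - finrank F2 S) - 2 ^ finrank F2 S) * r := by
  rw [← finrank_perp, ← card_mem_sdiff (isIsotropic_iff_le_perp.1 hS)]
  refine card_mul_eq_card_mul (fun X v => v ∈ X) (fun X hX => ?_) fun v hv => ?_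
  · obtain ⟨hXL, hSX⟩ := mem_filter_univ _ |>.1 hX
    have hXS : X ≤ perp S := fun v hv x hx => hXL.1 x (hSX hx) v hv
    have hcard := card_mem_sdiff hSX
    rw [hXL.2] at hcard
    rw [← hcard, bipartiteAbove, filter_filter]
    congr 1
    ext v
    have := @hXS v
    simp only [mem_filter_univ]
    tauto
  · obtain ⟨hvS, hv⟩ := mem_filter_univ _ |>.1 hv
    rw [← hr v hvS hv, bipartiteBelow, filter_filter]
    simp only [sup_le_iff, Submodule.span_singleton_le_iff_mem, and_assoc]

theorem card_lagrangian_ge {k : ℕ} {S : Submodule F2 (PV n)} (hS : S ∈ Lset n k) :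
    #{X | X ∈ Lset n n ∧ S ≤ X} = ∏ i ∈ range (n - k), (2 ^ (i + 1) + 1) := by
  have hk : k ≤ n := hS.2 ▸ hS.1.finrank_le
  induction hm : n - k generalizing k S with
  | zero =>
    obtain rfl : k = n := by omega
    rw [range_zero, prod_empty, card_eq_one]
    refine ⟨S, ?_⟩
    ext X
    rw [mem_filter_univ, mem_singleton]
    constructor
    · rintro ⟨hX, hSX⟩
      exact (Submodule.eq_of_le_of_finrank_eq hSX (hS.2.trans hX.2.symm)).symm
    · rintro rfl
      exact ⟨hS, le_rfl⟩
  | succ m ih =>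
    have count := card_lagrangian_ge_mul hS.1 fun v hv hvS =>
      ih (k := k + 1)
        ⟨hS.1.sup_span_singleton hv, by rw [Submodule.finrank_sup_span_singleton hvS, hS.2]⟩
        (by omega) (by omega)
    obtain rfl : n = k + (m + 1) := by omega
    have hlag : 2 ^ (k + (m + 1)) - 2 ^ k = 2 ^ k * (2 ^ (m + 1) - 1) := by
      rw [pow_add, Nat.mul_sub_one]
    have hperp : 2 ^ (2 * (k + (m + 1)) - k) - 2 ^ k
        = 2 ^ k * (2 ^ (m + 1) - 1) * (2 ^ (m + 1) + 1) := by
      rw [mul_assoc, mul_comm (_ - 1), ← Nat.sq_sub_sq _ 1, one_pow, ← pow_mul, Nat.mul_sub_one,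
        ← pow_add]
      congr 2
      omega
    rw [hS.2, hlag, hperp] at count
    have hpos : 0 < 2 ^ k * (2 ^ (m + 1) - 1) :=
      Nat.mul_pos (by positivity) (Nat.sub_pos_of_lt (Nat.one_lt_two_pow m.succ_ne_zero))
    rw [prod_range_succ, mul_comm (∏ _ ∈ _, _)]
    refine Nat.eq_of_mul_eq_mul_right hpos ?_
    rw [count]
    ring

theorem IsIsotropic.exists_lagrangian_ge {S : Submodule F2 (PV n)} (hS : IsIsotropic S) :
    ∃ X ∈ Lset n n, S ≤ X := by
  have hpos : 0 < #{X | X ∈ Lset n n ∧ S ≤ X} := by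
    rw [card_lagrangian_ge ⟨hS, rfl⟩]
    positivity
  obtain ⟨X, hX⟩ := card_pos.1 hpos
  exact ⟨X, (mem_filter_univ X).1 hX⟩

theorem exists_adjacent_lagrangian {X : Submodule F2 (PV n)} (hX : X ∈ Lset n n) {v : PV n}
    (hv : v ∉ X) : ∃ X' ∈ Lset n n, v ∈ X' ∧ X ⊓ perp (F2 ∙ v) ≤ X' ∧
      n ≤ finrank F2 (X ⊓ perp (F2 ∙ v) : Submodule F2 (PV n)) + 1 := by
  have hv0 : v ≠ 0 := fun h => hv (h ▸ X.zero_mem)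
  set K := X ⊓ perp (F2 ∙ v)
  have hK : n ≤ finrank F2 K + 1 := by
    have hdim : _ + finrank F2 K = _ := Submodule.finrank_sup_add_finrank_inf_eq X (perp (F2 ∙ v))
    have hsup := Submodule.finrank_le (X ⊔ perp (F2 ∙ v))
    rw [Module.finrank_prod, Module.finrank_fin_fun] at hsup
    rw [hX.2, finrank_perp, finrank_span_singleton hv0] at hdim
    omega
  have hvK : v ∈ perp K := mem_perp.2 fun x hx => by
    rw [symp_comm]
    exact hx.2 v (Submodule.mem_span_singleton_self v)
  have hKX : K ≤ X := inf_le_left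
  have hiso : IsIsotropic (K ⊔ F2 ∙ v) := (hX.1.mono hKX).sup_span_singleton hvK
  refine ⟨K ⊔ F2 ∙ v, ⟨hiso, hiso.finrank_le.antisymm ?_⟩,
    Submodule.mem_sup_right (Submodule.mem_span_singleton_self v), le_sup_left, hK⟩
  rwa [Submodule.finrank_sup_span_singleton fun h => hv (hKX h)]

end Symplectic

/-! ### The graph `B_{n,2}` -/

section Graph

open Module

/-- The bipartite graph `B_{n,2}`. -/
def graphB (n : ℕ) : SimpleGraph (BVtx n) where
  Adj := BAdj
  symm := ⟨fun _ _ => Or.symm⟩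
  loopless := ⟨fun _ h => by simp [BAdj] at h⟩

/-- The side `L^n_n` of `B_{n,2}`. -/
noncomputable def lagrangians (n : ℕ) : Finset (BVtx n) := {x | x.1 ∈ Lset n n}

variable {n : ℕ}

theorem adjMatrix_graphB : (graphB n).adjMatrix ℝ = adjB n := by
  ext x y
  rw [SimpleGraph.adjMatrix_apply, adjB, adjMat]
  rfl

theorem mem_lagrangians {x : BVtx n} : x ∈ lagrangians n ↔ x.1 ∈ Lset n n := by
  rw [lagrangians, mem_filter_univ]

theorem mem_lagrangians_compl (hn : n ≠ 2) {x : BVtx n} :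
    x ∈ (lagrangians n)ᶜ ↔ x.1 ∈ Lset n 2 := by
  rw [mem_compl, mem_lagrangians]
  exact ⟨x.2.resolve_left, fun h2 hL => hn (hL.2.symm.trans h2.2)⟩

theorem graphB_adj_iff (hn : n ≠ 2) {x y : BVtx n} (hx : x ∈ lagrangians n) :
    (graphB n).Adj x y ↔ y.1 ∈ Lset n 2 ∧ y.1 ≤ x.1 := by
  have hxL := mem_lagrangians.1 hx
  have hx2 : x.1 ∉ Lset n 2 := fun h => mem_compl.1 ((mem_lagrangians_compl hn).2 h) hx
  have hne (hy : y.1 ∈ Lset n 2) : y.1 ≠ x.1 := fun h => hx2 (h ▸ hy)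
  simp only [graphB, BAdj, hx2, hxL, false_and, false_or, true_and, lt_iff_le_and_ne]
  tauto

theorem graphB_adj_iff' (hn : n ≠ 2) {t x : BVtx n} (ht : t ∈ (lagrangians n)ᶜ) :
    (graphB n).Adj t x ↔ x.1 ∈ Lset n n ∧ t.1 ≤ x.1 := by
  have ht2 := (mem_lagrangians_compl hn).1 ht
  by_cases hx : x ∈ lagrangians n
  · rw [SimpleGraph.adj_comm, graphB_adj_iff hn hx, and_iff_right ht2,
      and_iff_right (mem_lagrangians.1 hx)]
  · have hxL := mt mem_lagrangians.2 hx
    have htL := mt mem_lagrangians.2 (mem_compl.1 ht)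
    simp only [graphB, BAdj, hxL, htL, false_and, and_false, or_false]

theorem isBipartiteWith_graphB (hn : n ≠ 2) :
    (graphB n).IsBipartiteWith (lagrangians n : Set (BVtx n)) ((lagrangians n)ᶜ : Finset _) where
  disjoint := by simpa using disjoint_compl_right
  mem_of_adj x y hxy := by
    simp only [mem_coe, mem_lagrangians_compl hn, mem_lagrangians]
    exact hxy.symm.imp (fun h => ⟨h.2.1, h.1⟩) fun h => ⟨h.1, h.2.1⟩

theorem card_vertices {s : Finset (BVtx n)} {p : Submodule F2 (PV n) → Prop}
    (hs : ∀ x, x ∈ s ↔ p x.1) (hp : ∀ S, p S → S ∈ Lset n n ∪ Lset n 2) :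
    #s = Nat.card {S // p S} := by
  rw [← Nat.card_eq_finsetCard]
  exact Nat.card_congr
    ((Equiv.subtypeEquivRight hs).trans (Equiv.subtypeSubtypeEquivSubtype fun {S} => hp S))

theorem degree_lagrangian (hn : n ≠ 2) {x : BVtx n} (hx : x ∈ lagrangians n) :
    (graphB n).degree x = Nat.card {t // t ≤ x.1 ∧ finrank F2 t = 2} := by
  have hiso := (mem_lagrangians.1 hx).1
  rw [← SimpleGraph.card_neighborFinset_eq_degree,
    card_vertices (p := fun t => t ∈ Lset n 2 ∧ t ≤ x.1) (by simp [graphB_adj_iff hn hx])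
      fun t ht => Or.inr ht.1]
  exact Nat.card_congr (Equiv.subtypeEquivRight fun t =>
    ⟨fun h => ⟨h.2, h.1.2⟩, fun h => ⟨⟨hiso.mono h.1, h.2⟩, h.1⟩⟩)

theorem degree_plane (hn : n ≠ 2) {t : BVtx n} (ht : t ∈ (lagrangians n)ᶜ) :
    (graphB n).degree t = ∏ i ∈ range (n - 2), (2 ^ (i + 1) + 1) := by
  rw [← card_lagrangian_ge ((mem_lagrangians_compl hn).1 ht),
    ← SimpleGraph.card_neighborFinset_eq_degree,
    card_vertices (p := fun X => X ∈ Lset n n ∧ t.1 ≤ X) (by simp [graphB_adj_iff' hn ht])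
      fun X hX => Or.inl hX.1, Nat.card_eq_fintype_card, Fintype.card_subtype]

theorem nonempty_lagrangians : (lagrangians n).Nonempty := by
  have hbot : IsIsotropic (⊥ : Submodule F2 (PV n)) := by simp [IsIsotropic, symp_self]
  obtain ⟨X, hX, -⟩ := hbot.exists_lagrangian_ge
  exact ⟨⟨X, Or.inl hX⟩, mem_lagrangians.2 hX⟩

theorem exists_isBiregularWith_graphB (hn : 3 ≤ n) :
    ∃ a b, 0 < a ∧ IsBiregularWith (graphB n) (lagrangians n) a b := by
  have hn2 : n ≠ 2 := by omega
  obtain ⟨x₀, hx₀⟩ := nonempty_lagrangians (n := n)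
  have hx₀L := mem_lagrangians.1 hx₀
  refine ⟨(graphB n).degree x₀, _, ?_, isBipartiteWith_graphB hn2, fun x hx => ?_,
    fun t ht => degree_plane hn2 ht⟩
  · obtain ⟨t, htx, ht⟩ := exists_le_finrank_eq (X := x₀.1) (j := 2) (by rw [hx₀L.2]; omega)
    rw [degree_lagrangian hn2 hx₀]
    exact Nat.card_pos_iff.2 ⟨⟨⟨t, htx, ht⟩⟩, inferInstance⟩
  · rw [degree_lagrangian hn2 hx, degree_lagrangian hn2 hx₀]
    exact natCard_le_finrank_eq ((mem_lagrangians.1 hx).2.trans hx₀L.2.symm) 2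

theorem reachable_of_two_le_finrank_inf (hn : n ≠ 2) {x y : BVtx n} (hx : x ∈ lagrangians n)
    (hy : y ∈ lagrangians n) (h : 2 ≤ finrank F2 (x.1 ⊓ y.1 : Submodule F2 (PV n))) :
    (graphB n).Reachable x y := by
  obtain ⟨t, htxy, ht⟩ := exists_le_finrank_eq h
  have htx := htxy.trans inf_le_left
  have ht2 : t ∈ Lset n 2 := ⟨(mem_lagrangians.1 hx).1.mono htx, ht⟩
  let t' : BVtx n := ⟨t, Or.inr ht2⟩
  have hxt : (graphB n).Adj x t' := (graphB_adj_iff hn hx).2 ⟨ht2, htx⟩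
  have hyt : (graphB n).Adj y t' := (graphB_adj_iff hn hy).2 ⟨ht2, htxy.trans inf_le_right⟩
  exact hxt.reachable.trans hyt.symm.reachable

theorem reachable_lagrangians (hn : 3 ≤ n) {x y : BVtx n} (hx : x ∈ lagrangians n)
    (hy : y ∈ lagrangians n) : (graphB n).Reachable x y := by
  have hn2 : n ≠ 2 := by omega
  have hyL := mem_lagrangians.1 hy
  induction hm : n - finrank F2 (x.1 ⊓ y.1 : Submodule F2 (PV n)) using Nat.strong_induction_on
    generalizing x with
  | _ m ih =>
    have hxL := mem_lagrangians.1 hx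
    by_cases hyx : y.1 ≤ x.1
    · obtain rfl : x = y :=
        Subtype.ext (Submodule.eq_of_le_of_finrank_eq hyx (hyL.2.trans hxL.2.symm)).symm
      exact .rfl
    obtain ⟨v, hvy, hvx⟩ := SetLike.not_le_iff_exists.1 hyx
    obtain ⟨Z, hZ, hvZ, hxZ, hdim⟩ := exists_adjacent_lagrangian hxL hvx
    let z : BVtx n := ⟨Z, Or.inl hZ⟩
    have hz : z ∈ lagrangians n := mem_lagrangians.2 hZ
    have hxz : 2 ≤ finrank F2 (x.1 ⊓ Z : Submodule F2 (PV n)) := by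
      have := Submodule.finrank_mono (le_inf inf_le_left hxZ)
      omega
    have hyv : y.1 ≤ perp (F2 ∙ v) := fun u hu =>
      mem_perp_span.2 fun w hw => hyL.1 w (hw ▸ hvy) u hu
    have hlt : x.1 ⊓ y.1 < Z ⊓ y.1 :=
      SetLike.lt_iff_le_and_exists.2 ⟨le_inf ((inf_le_inf_left _ hyv).trans hxZ) inf_le_right,
        v, Submodule.mem_inf.2 ⟨hvZ, hvy⟩, fun h => hvx (Submodule.mem_inf.1 h).1⟩
    have hdecr : n - finrank F2 (Z ⊓ y.1 : Submodule F2 (PV n)) < m := by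
      have hfin := Submodule.finrank_lt_finrank_of_lt hlt
      have hle := Submodule.finrank_mono (inf_le_right : Z ⊓ y.1 ≤ y.1)
      rw [hyL.2] at hle
      omega
    exact (reachable_of_two_le_finrank_inf hn2 hx hz hxz).trans (ih _ hdecr hz rfl)

theorem preconnected_graphB (hn : 3 ≤ n) : (graphB n).Preconnected := by
  have hn2 : n ≠ 2 := by omega
  have exists_lagrangian (x : BVtx n) : ∃ y ∈ lagrangians n, (graphB n).Reachable x y := by
    by_cases hx : x ∈ lagrangians n
    · exact ⟨x, hx, .rfl⟩
    · have hxc := mem_compl.2 hx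
      obtain ⟨X, hX, hxX⟩ := ((mem_lagrangians_compl hn2).1 hxc).1.exists_lagrangian_ge
      exact ⟨⟨X, Or.inl hX⟩, mem_lagrangians.2 hX,
        ((graphB_adj_iff' hn2 hxc).2 ⟨hX, hxX⟩).reachable⟩
  intro x y
  obtain ⟨x', hx', hxx'⟩ := exists_lagrangian x
  obtain ⟨y', hy', hyy'⟩ := exists_lagrangian y
  exact hxx'.trans ((reachable_lagrangians hn hx' hy').trans hyy'.symm)

end Graph

/-! ### Outcomes and Mermin squares -/

section Phase

open scoped Matrix

variable {n : ℕ}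

/-- The character `z ↦ (-1)^z` of `F2`. -/
noncomputable def signChar : AddChar F2 ℂ := AddChar.zmodChar 2 neg_one_sq

theorem signChar_one : signChar 1 = -1 := by
  rw [signChar, AddChar.zmodChar_apply, ZMod.val_one, pow_one]

theorem signChar_intCast (z : ℤ) : signChar z = (-1) ^ z := by
  rw [← zsmul_one, AddChar.map_zsmul_eq_zpow, signChar_one]

theorem signChar_injective : Function.Injective signChar := by
  refine (AddChar.injective_iff (ψ := signChar)).2 fun z hz => ?_
  obtain rfl | rfl := (by decide : ∀ z : F2, z = 0 ∨ z = 1) z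
  · rfl
  · rw [signChar_one] at hz
    norm_num at hz

theorem intCast_dotZ (a b : Fin n → F2) : (dotZ (liftZ a) (liftZ b) : F2) = a ⬝ᵥ b := by
  simp [dotZ, liftZ, dotProduct]

theorem symp_eq_dotProduct (x y : PV n) : symp x y = x.1 ⬝ᵥ y.2 + x.2 ⬝ᵥ y.1 := rfl

/-- The factor `i^{x̂₁·x̂₂}` of the phases involving `x`. -/
noncomputable def selfPhase (x : PV n) : ℂ := Complex.I ^ dotZ (liftZ x.1) (liftZ x.2)

theorem selfPhase_ne_zero (x : PV n) : selfPhase x ≠ 0 :=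
  zpow_ne_zero _ Complex.I_ne_zero

theorem selfPhase_sq (x : PV n) : selfPhase x ^ 2 = signChar (x.1 ⬝ᵥ x.2) := by
  rw [selfPhase, ← zpow_natCast, ← zpow_mul, mul_comm, zpow_mul, zpow_natCast, Complex.I_sq,
    ← signChar_intCast, intCast_dotZ]

theorem phase_eq (x y : PV n) :
    phase x y = selfPhase x * selfPhase y / selfPhase (x + y) * signChar (x.2 ⬝ᵥ y.1) := by
  rw [phase, zpow_neg, ← div_eq_mul_inv, ← signChar_intCast, intCast_dotZ, selfPhase, selfPhase,
    selfPhase]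

theorem phase_sq (x y : PV n) : phase x y ^ 2 = signChar (symp x y) := by
  have hexp : x.1 ⬝ᵥ x.2 + y.1 ⬝ᵥ y.2 - (x + y).1 ⬝ᵥ (x + y).2 + 2 • (x.2 ⬝ᵥ y.1) = symp x y := by
    rw [symp_eq_dotProduct, Prod.fst_add, Prod.snd_add, add_dotProduct, dotProduct_add,
      dotProduct_add, dotProduct_comm y.1 x.2, CharTwo.sub_eq_add, CharTwo.two_nsmul]
    linear_combination (x.1 ⬝ᵥ x.2 + y.1 ⬝ᵥ y.2) * CharTwo.two_eq_zero (R := F2)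
  rw [phase_eq, mul_pow, div_pow, mul_pow, selfPhase_sq, selfPhase_sq, selfPhase_sq, ← hexp,
    AddChar.map_add_eq_mul, AddChar.map_nsmul_eq_pow, AddChar.map_sub_eq_div,
    AddChar.map_add_eq_mul]

theorem phase_eq_signChar_wght {x y : PV n} (h : symp x y = 0) :
    phase x y = signChar (wght x y) := by
  have hsq : phase x y ^ 2 = 1 := by rw [phase_sq, h, AddChar.map_zero_eq_one]
  obtain hp | hp := sq_eq_one_iff.1 hsq
  · rw [wght, if_pos hp, hp, AddChar.map_zero_eq_one]
  · rw [wght, hp, if_neg (by norm_num), signChar_one]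

theorem phase_mermin_square {a b c d : PV n} (hbc : symp b c = 1) :
    phase a b * phase c d * phase (a + b) (c + d)
      = -(phase a c * phase b d * phase (a + c) (b + d)) := by
  have hexp : a.2 ⬝ᵥ b.1 + c.2 ⬝ᵥ d.1 + (a + b).2 ⬝ᵥ (c + d).1
      = a.2 ⬝ᵥ c.1 + b.2 ⬝ᵥ d.1 + (a + c).2 ⬝ᵥ (b + d).1 + 1 := by
    simp only [← hbc, symp_eq_dotProduct, Prod.fst_add, Prod.snd_add, add_dotProduct,
      dotProduct_add, dotProduct_comm b.1 c.2]
    linear_combination (-(c.2 ⬝ᵥ b.1)) * CharTwo.two_eq_zero (R := F2)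
  have hsign := congrArg signChar hexp
  simp only [AddChar.map_add_eq_mul, signChar_one] at hsign
  simp only [phase_eq, add_add_add_comm a c b d]
  have := selfPhase_ne_zero (a + b)
  have := selfPhase_ne_zero (c + d)
  have := selfPhase_ne_zero (a + c)
  have := selfPhase_ne_zero (b + d)
  have := selfPhase_ne_zero (a + b + (c + d))
  field_simp
  linear_combination selfPhase a * selfPhase b * selfPhase c * selfPhase d * hsign

theorem wght_mermin_square {a b c d : PV n} (hab : symp a b = 0) (hac : symp a c = 0)
    (hbd : symp b d = 0) (hcd : symp c d = 0) (had : symp a d = 1) (hbc : symp b c = 1) :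
    wght a b + wght c d + wght (a + b) (c + d)
      = wght a c + wght b d + wght (a + c) (b + d) + 1 := by
  have hrow : symp (a + b) (c + d) = 0 := by
    simp only [symp_add_left, symp_add_right, hac, had, hbc, hbd]
    decide
  have hcol : symp (a + c) (b + d) = 0 := by
    simp only [symp_add_left, symp_add_right, hab, had, symp_comm c b, hbc, hcd]
    decide
  have hphase := phase_mermin_square (a := a) (d := d) hbc
  rw [phase_eq_signChar_wght hab, phase_eq_signChar_wght hac, phase_eq_signChar_wght hbd,
    phase_eq_signChar_wght hcd, phase_eq_signChar_wght hrow, phase_eq_signChar_wght hcol,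
    ← mul_neg_one, ← signChar_one] at hphase
  simp only [← AddChar.map_add_eq_mul] at hphase
  exact signChar_injective hphase

end Phase

section Outcomes

variable {n : ℕ}

/-- The restriction to `t` of a function on the whole space is an outcome of `t`. -/
def RestrictsToOutcome (F : PV n → F2) (t : Submodule F2 (PV n)) : Prop :=
  IsOutcome t fun x => F x

theorem RestrictsToOutcome.mono {F : PV n → F2} {s t : Submodule F2 (PV n)}
    (h : RestrictsToOutcome F t) (hst : s ≤ t) : RestrictsToOutcome F s :=
  fun x y => h ⟨x, hst x.2⟩ ⟨y, hst y.2⟩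

theorem RestrictsToOutcome.apply_add_of_span_pair {F : PV n → F2} {x y : PV n}
    (h : RestrictsToOutcome F (.span F2 {x, y})) : F (x + y) = F x + F y + wght x y :=
  h ⟨x, Submodule.mem_span_of_mem (by simp)⟩ ⟨y, Submodule.mem_span_of_mem (by simp)⟩

theorem exists_restrictsToOutcome {D : Set (Submodule F2 (PV n))}
    {f : (S : Submodule F2 (PV n)) → (S → F2)} (hf : ∀ S ∈ D, IsOutcome S (f S))
    (hcons : ∀ S₁ ∈ D, ∀ S₂ ∈ D, ConsistentOn (f S₁) (f S₂)) :
    ∃ F : PV n → F2, ∀ S ∈ D, RestrictsToOutcome F S := by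
  have hglue (v : PV n) : ∃ c, ∀ S ∈ D, ∀ hv : v ∈ S, f S ⟨v, hv⟩ = c := by
    by_cases h : ∃ S ∈ D, v ∈ S
    · obtain ⟨S, hS, hv⟩ := h
      exact ⟨f S ⟨v, hv⟩, fun T hT hvT => hcons T hT S hS v hvT hv⟩
    · exact ⟨0, fun S hS hv => (h ⟨S, hS, hv⟩).elim⟩
  choose F hF using hglue
  refine ⟨F, fun S hS x y => ?_⟩
  simpa only [hF _ S hS] using hf S hS x y

theorem exists_not_restrictsToOutcome_mermin_square {a b c d : PV n} (hab : symp a b = 0)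
    (hac : symp a c = 0) (hbd : symp b d = 0) (hcd : symp c d = 0) (had : symp a d = 1)
    (hbc : symp b c = 1) (F : PV n → F2) :
    ∃ p ∈ [(a, b), (c, d), (a + b, c + d), (a, c), (b, d), (a + c, b + d)],
      ¬ RestrictsToOutcome F (.span F2 {p.1, p.2}) := by
  by_contra! hF
  simp only [List.forall_mem_cons, List.not_mem_nil] at hF
  obtain ⟨h₁, h₂, h₃, h₄, h₅, h₆, -⟩ := hF
  have hrows := h₃.apply_add_of_span_pair
  have hcols := h₆.apply_add_of_span_pair
  rw [h₁.apply_add_of_span_pair, h₂.apply_add_of_span_pair] at hrows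
  rw [h₄.apply_add_of_span_pair, h₅.apply_add_of_span_pair, add_add_add_comm, hrows] at hcols
  refine one_ne_zero (α := F2) ?_
  linear_combination hcols - wght_mermin_square hab hac hbd hcd had hbc

end Outcomes

/-! ### Pentads -/

section Translates

variable {G : Type*} [Group G]

theorem natCard_dvd_natCard_of_mul_mem (H : Subgroup G) {s : Set G}
    (hs : ∀ g ∈ s, ∀ h ∈ H, g * h ∈ s) : Nat.card H ∣ Nat.card s := by
  have hpre : (QuotientGroup.mk : G → G ⧸ H) ⁻¹' (QuotientGroup.mk '' s) = s := by
    refine (Set.subset_preimage_image _ s).antisymm' ?_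
    rintro g ⟨g', hg', hgg'⟩
    simpa using hs g' hg' _ (QuotientGroup.eq.1 hgg')
  rw [← hpre, QuotientGroup.card_preimage_mk]
  exact dvd_mul_right _ _

theorem card_le_card_mul_of_exists_mul_mem [Fintype G] {s T : Finset G}
    (h : ∀ g, ∃ τ ∈ T, g * τ ∈ s) : Fintype.card G ≤ #s * #T := by
  open scoped Pointwise in
  have hcover : (univ : Finset G) ⊆ s * T⁻¹ := fun g _ => by
    obtain ⟨τ, hτ, hg⟩ := h g
    exact mem_mul.2 ⟨g * τ, hg, τ⁻¹, inv_mem_inv hτ, mul_inv_cancel_right g τ⟩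
  rw [← card_univ, ← card_inv T]
  exact (card_le_card hcover).trans card_mul_le

end Translates

section Pentads

open Equiv

variable {n : ℕ} {Q : Fin 5 → PV n}

/-- A pentad: five vectors with pairwise symplectic products `1` and zero sum. The points `Q i` and
`Q i + Q j` form a doily (generalized quadrangle of order 2), whose fifteen lines are the triples
`{Q i, Q j + Q k, Q l + Q m}` with `{i, j, k, l, m} = {0, 1, 2, 3, 4}`. -/
structure IsPentad (Q : Fin 5 → PV n) : Prop where
  symp_eq_one : ∀ i j, i ≠ j → symp (Q i) (Q j) = 1
  sum_eq_zero : ∑ i, Q i = 0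

/-- The plane spanned by one of the fifteen lines of the doily of a pentad; the others are obtained
by permuting the pentad. -/
def pentadPlane (Q : Fin 5 → PV n) : Submodule F2 (PV n) :=
  .span F2 (Set.range ![Q 0, Q 1 + Q 2])

theorem apply_zero_mem_pentadPlane : Q 0 ∈ pentadPlane Q :=
  Submodule.mem_span_of_mem (by simp)

theorem add_one_two_mem_pentadPlane : Q 1 + Q 2 ∈ pentadPlane Q :=
  Submodule.mem_span_of_mem (by simp)

theorem pentadPlane_le_iff {t : Submodule F2 (PV n)} :
    pentadPlane Q ≤ t ↔ Q 0 ∈ t ∧ Q 1 + Q 2 ∈ t := by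
  rw [pentadPlane, Submodule.span_le, Matrix.range_cons_cons_empty, Set.insert_subset_iff,
    Set.singleton_subset_iff, SetLike.mem_coe, SetLike.mem_coe]

/-- The permutations carrying the line `{Q 0, Q 1 + Q 2, Q 3 + Q 4}` of the doily of a pentad to
the rows and columns of the Mermin square with entries
`Q 0`, `Q 1 + Q 3`, `Q 2 + Q 4` / `Q 2 + Q 3`, `Q 4`, `Q 0 + Q 1` /
`Q 1 + Q 4`, `Q 0 + Q 2`, `Q 3`. -/
def merminPerms : Finset (Perm (Fin 5)) :=
  {swap 2 3, swap 0 4 * swap 1 3, swap 0 3 * swap 1 4,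
    swap 1 3, swap 0 4 * swap 2 3, swap 0 3 * swap 2 4}

theorem card_merminPerms_le : #merminPerms ≤ 6 := card_le_six

namespace IsPentad

theorem comp_perm (hQ : IsPentad Q) (σ : Perm (Fin 5)) : IsPentad (Q ∘ σ) where
  symp_eq_one i j hij := hQ.symp_eq_one _ _ (σ.injective.ne hij)
  sum_eq_zero := by
    rw [← hQ.sum_eq_zero]
    exact Equiv.sum_comp σ Q

theorem eq_of_add_eq_sum (hQ : IsPentad Q) {x y : PV n}
    (h : x + y = Q 0 + Q 1 + Q 2 + Q 3 + Q 4) : x = y := by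
  rw [← Fin.sum_univ_five, hQ.sum_eq_zero, add_eq_zero_iff_eq_neg, ZModModule.neg_eq_self] at h
  exact h

theorem add_three_four_mem_pentadPlane (hQ : IsPentad Q) : Q 3 + Q 4 ∈ pentadPlane Q := by
  have h34 : Q 3 + Q 4 = Q 0 + (Q 1 + Q 2) := hQ.eq_of_add_eq_sum (by abel)
  rw [h34]
  exact add_mem apply_zero_mem_pentadPlane add_one_two_mem_pentadPlane

theorem symp_zero_add_one_two (hQ : IsPentad Q) : symp (Q 0) (Q 1 + Q 2) = 0 := by
  rw [symp_add_right, hQ.symp_eq_one 0 1 (by decide), hQ.symp_eq_one 0 2 (by decide)]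
  rfl

theorem linearIndependent (hQ : IsPentad Q) :
    LinearIndependent F2 ![Q 0, Q 1 + Q 2] := by
  refine LinearIndependent.pair_iff.2 fun r s hrs => ?_
  have hsymp (v : PV n) : r * symp (Q 0) v + s * (symp (Q 1) v + symp (Q 2) v) = 0 := by
    have := congrArg (sympForm n · v) hrs
    simpa only [map_add, map_smul, map_zero, LinearMap.add_apply, LinearMap.smul_apply,
      LinearMap.zero_apply, sympForm_apply, smul_eq_mul] using this
  have hr := hsymp (Q 3)
  have hs := hsymp (Q 1)
  rw [hQ.symp_eq_one 0 3 (by decide), hQ.symp_eq_one 1 3 (by decide),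
    hQ.symp_eq_one 2 3 (by decide)] at hr
  rw [hQ.symp_eq_one 0 1 (by decide), symp_self, hQ.symp_eq_one 2 1 (by decide)] at hs
  exact (by decide : ∀ r s : F2, r * 1 + s * (1 + 1) = 0 → r * 1 + s * (0 + 1) = 0 →
    r = 0 ∧ s = 0) r s hr hs

theorem pentadPlane_mem_Lset (hQ : IsPentad Q) : pentadPlane Q ∈ Lset n 2 := by
  refine ⟨?_, finrank_span_eq_card hQ.linearIndependent⟩
  rw [pentadPlane, Matrix.range_cons_cons_empty]
  exact isIsotropic_span_pair hQ.symp_zero_add_one_two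

theorem exists_merminPerms_not_restrictsToOutcome (hQ : IsPentad Q) (F : PV n → F2) :
    ∃ τ ∈ merminPerms, ¬ RestrictsToOutcome F (pentadPlane (Q ∘ τ)) := by
  have hsymp (i j) (hij : i ≠ j := by decide) := hQ.symp_eq_one i j hij
  obtain ⟨p, hp, hbad⟩ := exists_not_restrictsToOutcome_mermin_square
    (a := Q 0) (b := Q 1 + Q 3) (c := Q 2 + Q 3) (d := Q 4)
    (by rw [symp_add_right, hsymp 0 1, hsymp 0 3]; rfl)
    (by rw [symp_add_right, hsymp 0 2, hsymp 0 3]; rfl)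
    (by rw [symp_add_left, hsymp 1 4, hsymp 3 4]; rfl)
    (by rw [symp_add_left, hsymp 2 4, hsymp 3 4]; rfl) (hsymp 0 4)
    (by simp only [symp_add_left, symp_add_right, symp_self, hsymp 1 2, hsymp 1 3, hsymp 3 2]; rfl)
    F
  suffices h : ∃ τ ∈ merminPerms,
      p.1 ∈ pentadPlane (Q ∘ τ) ∧ p.2 ∈ pentadPlane (Q ∘ τ) by
    obtain ⟨τ, hτ, h₁, h₂⟩ := h
    exact ⟨τ, hτ, fun hF => hbad (hF.mono (Submodule.span_le.2 (Set.pair_subset h₁ h₂)))⟩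
  have h₁ : Q 0 + (Q 1 + Q 3) = Q 4 + Q 2 := hQ.eq_of_add_eq_sum (by abel)
  have h₂ : Q 2 + Q 3 + Q 4 = Q 0 + Q 1 := hQ.eq_of_add_eq_sum (by abel)
  have h₃ : Q 0 + (Q 2 + Q 3) = Q 1 + Q 4 := hQ.eq_of_add_eq_sum (by abel)
  have h₄ : Q 1 + Q 3 + Q 4 = Q 0 + Q 2 := hQ.eq_of_add_eq_sum (by abel)
  have mem₀ (τ : Perm (Fin 5)) : Q (τ 0) ∈ pentadPlane (Q ∘ τ) := apply_zero_mem_pentadPlane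
  have mem₁₂ (τ : Perm (Fin 5)) : Q (τ 1) + Q (τ 2) ∈ pentadPlane (Q ∘ τ) :=
    add_one_two_mem_pentadPlane
  have mem₃₄ (τ : Perm (Fin 5)) : Q (τ 3) + Q (τ 4) ∈ pentadPlane (Q ∘ τ) :=
    (hQ.comp_perm τ).add_three_four_mem_pentadPlane
  simp only [h₁, h₂, h₃, h₄, List.mem_cons, List.not_mem_nil, or_false] at hp
  obtain rfl | rfl | rfl | rfl | rfl | rfl := hp
  · exact ⟨swap 2 3, by decide, mem₀ (swap 2 3), mem₁₂ (swap 2 3)⟩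
  · refine ⟨swap 0 4 * swap 1 3, by decide, ?_, mem₀ (swap 0 4 * swap 1 3)⟩
    exact add_comm (Q 3) (Q 2) ▸ mem₁₂ (swap 0 4 * swap 1 3)
  · exact ⟨swap 0 3 * swap 1 4, by decide, mem₁₂ (swap 0 3 * swap 1 4),
      mem₃₄ (swap 0 3 * swap 1 4)⟩
  · exact ⟨swap 1 3, by decide, mem₀ (swap 1 3), add_comm (Q 3) (Q 2) ▸ mem₁₂ (swap 1 3)⟩
  · exact ⟨swap 0 4 * swap 2 3, by decide, mem₁₂ (swap 0 4 * swap 2 3),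
      mem₀ (swap 0 4 * swap 2 3)⟩
  · exact ⟨swap 0 3 * swap 2 4, by decide, mem₁₂ (swap 0 3 * swap 2 4),
      mem₃₄ (swap 0 3 * swap 2 4)⟩

end IsPentad

/-- The symmetry group of the line `{Q 0, Q 1 + Q 2, Q 3 + Q 4}`: a permutation preserves the pairs
`{1, 2}` and `{3, 4}` up to exchange exactly when it commutes with `(1 2)(3 4)`. -/
def lineStabilizer : Subgroup (Perm (Fin 5)) := Subgroup.centralizer {swap 1 2 * swap 3 4}

theorem natCard_lineStabilizer : Nat.card lineStabilizer = 8 := by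
  rw [lineStabilizer, Nat.card_congr (Equiv.subtypeEquivRight fun h =>
    Subgroup.mem_centralizer_singleton_iff), Nat.card_eq_fintype_card]
  decide +kernel

theorem IsPentad.pentadPlane_comp_le (hQ : IsPentad Q) {h : Perm (Fin 5)}
    (hh : h ∈ lineStabilizer) : pentadPlane (Q ∘ h) ≤ pentadPlane Q := by
  have key : ∀ h : Perm (Fin 5), h * (swap 1 2 * swap 3 4) = swap 1 2 * swap 3 4 * h →
      h 0 = 0 ∧
        (h 1 = 1 ∧ h 2 = 2 ∨ h 1 = 2 ∧ h 2 = 1 ∨ h 1 = 3 ∧ h 2 = 4 ∨ h 1 = 4 ∧ h 2 = 3) := by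
    decide +kernel
  have h12 : Q 1 + Q 2 ∈ pentadPlane Q := add_one_two_mem_pentadPlane
  have h34 := hQ.add_three_four_mem_pentadPlane
  obtain ⟨h0, h'⟩ := key h (Subgroup.mem_centralizer_singleton_iff.1 hh)
  rw [pentadPlane_le_iff, Function.comp_apply, Function.comp_apply, Function.comp_apply, h0]
  refine ⟨apply_zero_mem_pentadPlane, ?_⟩
  obtain ⟨h1, h2⟩ | ⟨h1, h2⟩ | ⟨h1, h2⟩ | ⟨h1, h2⟩ := h' <;> rw [h1, h2]
  · exact h12
  · rwa [add_comm]
  · exact h34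
  · rwa [add_comm]

theorem card_perm_fin_five : Fintype.card (Perm (Fin 5)) = 120 := by
  rw [Fintype.card_perm, Fintype.card_fin]
  rfl

/-- Every pentad has a bad Mermin line among six, so at least `120 / 6 = 20` permutations are bad;
the bad permutations form a union of cosets of a group of order `8`, which improves this to `24`. -/
theorem IsPentad.card_perm_not_restrictsToOutcome_ge (hQ : IsPentad Q) (F : PV n → F2) :
    24 ≤ #{σ : Perm (Fin 5) | ¬ RestrictsToOutcome F (pentadPlane (Q ∘ σ))} := by
  set s : Finset (Perm (Fin 5)) := {σ | ¬ RestrictsToOutcome F (pentadPlane (Q ∘ σ))} with hs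
  have twenty_le : Fintype.card (Perm (Fin 5)) ≤ #s * 6 :=
    (card_le_card_mul_of_exists_mul_mem fun σ => by
      simpa only [hs, mem_filter_univ, Perm.coe_mul, ← Function.comp_assoc] using
        (hQ.comp_perm σ).exists_merminPerms_not_restrictsToOutcome F).trans
      (Nat.mul_le_mul_left _ card_merminPerms_le)
  have eight_dvd : 8 ∣ #s := by
    rw [← natCard_lineStabilizer, ← Nat.card_eq_finsetCard]
    refine natCard_dvd_natCard_of_mul_mem _ fun σ hσ h hh => ?_
    rw [mem_coe, hs, mem_filter_univ] at hσ ⊢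
    have hle := (hQ.comp_perm (σ * h)).pentadPlane_comp_le (inv_mem hh)
    rw [Function.comp_assoc, ← Perm.coe_mul, mul_inv_cancel_right] at hle
    exact fun hF => hσ (hF.mono hle)
  rw [card_perm_fin_five] at twenty_le
  omega

end Pentads

section Fibers

theorem card_le_mul_card_filter_of_fiberwise {α β : Type*} [DecidableEq β] {s : Finset α}
    {t : Finset β} {f : α → β} {p : β → Prop} [DecidablePred p] {C k : ℕ} (hC : 0 < C)
    (hf : ∀ a ∈ s, f a ∈ t) (hfiber : ∀ b ∈ t, #{a ∈ s | f a = b} = C)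
    (h : #s ≤ k * #{a ∈ s | p (f a)}) :
    #t ≤ k * #{b ∈ t | p b} := by
  have card_domain : #s = #t * C := by
    rw [card_eq_sum_card_fiberwise hf, sum_const_nat hfiber]
  have card_domain_filter : #{a ∈ s | p (f a)} = #{b ∈ t | p b} * C := by
    have hmaps : ∀ a ∈ ({a ∈ s | p (f a)} : Finset α), f a ∈ ({b ∈ t | p b} : Finset β) := by
      simpa only [mem_filter] using fun a ha => ⟨hf a ha.1, ha.2⟩
    refine (card_eq_sum_card_fiberwise hmaps).trans (sum_const_nat fun b hb => ?_)
    obtain ⟨hbt, hpb⟩ := mem_filter.1 hb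
    rw [← hfiber b hbt, filter_filter]
    congr 1
    exact filter_congr fun a _ => and_iff_right_of_imp fun hab => hab ▸ hpb
  rw [card_domain, card_domain_filter, ← mul_assoc] at h
  exact Nat.le_of_mul_le_mul_right h hC

end Fibers

section SpanningTuples

open Module

theorem span_range_eq_iff_of_finrank_eq {K V : Type*} [DivisionRing K] [AddCommGroup V]
    [Module K V] [FiniteDimensional K V] {k : ℕ} {t : Submodule K V} (ht : finrank K t = k)
    {v : Fin k → V} :
    Submodule.span K (Set.range v) = t ↔ (∀ i, v i ∈ t) ∧ LinearIndependent K v := by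
  constructor
  · rintro rfl
    refine ⟨fun i => Submodule.mem_span_of_mem ⟨i, rfl⟩, ?_⟩
    rw [linearIndependent_iff_card_eq_finrank_span, Fintype.card_fin]
    exact ht.symm
  · rintro ⟨hmem, hv⟩
    refine Submodule.eq_of_le_of_finrank_eq (Submodule.span_le.2 (Set.range_subset_iff.2 hmem)) ?_
    rw [finrank_span_eq_card hv, Fintype.card_fin, ht]

theorem natCard_span_range_eq {K V : Type*} [DivisionRing K] [Fintype K] [AddCommGroup V]
    [Module K V] [Finite V] {k : ℕ} {t : Submodule K V} (ht : finrank K t = k) :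
    Nat.card {v : Fin k → V // Submodule.span K (Set.range v) = t}
      = ∏ i : Fin k, (Fintype.card K ^ k - Fintype.card K ^ (i : ℕ)) := by
  let e : {v : Fin k → V // Submodule.span K (Set.range v) = t}
      ≃ {v : Fin k → t // LinearIndependent K v} :=
    (Equiv.subtypeEquivRight fun v => span_range_eq_iff_of_finrank_eq ht).trans
      { toFun v := ⟨fun i => ⟨v.1 i, v.2.1 i⟩, .of_comp t.subtype v.2.2⟩
        invFun v := ⟨fun i => v.1 i, fun i => (v.1 i).2, v.2.map' t.subtype t.ker_subtype⟩
        left_inv _ := rfl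
        right_inv _ := rfl }
  rw [Nat.card_congr e, card_linearIndependent ht.ge, ht]

end SpanningTuples

section PentadCount

open Equiv

variable {n : ℕ}

theorem card_isPentad_le (F : PV n → F2) :
    #{Q : Fin 5 → PV n | IsPentad Q}
      ≤ 5 * #{Q : Fin 5 → PV n | IsPentad Q ∧ ¬ RestrictsToOutcome F (pentadPlane Q)} := by
  set bad : Finset (Fin 5 → PV n) := {Q | IsPentad Q ∧ ¬ RestrictsToOutcome F (pentadPlane Q)}
  have card_bad_pentads (σ : Perm (Fin 5)) :
      #{Q | IsPentad Q ∧ ¬ RestrictsToOutcome F (pentadPlane (Q ∘ σ))} ≤ #bad :=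
    card_le_card_of_injOn (· ∘ σ)
      (fun Q hQ => by
        simp only [bad, coe_filter_univ, Set.mem_ofPred_eq] at hQ ⊢
        exact ⟨hQ.1.comp_perm σ, hQ.2⟩)
      σ.surjective.injective_comp_right.injOn
  have double_count : #{Q : Fin 5 → PV n | IsPentad Q} * 24
      ≤ #(univ : Finset (Perm (Fin 5))) * #bad :=
    card_mul_le_card_mul (s := {Q : Fin 5 → PV n | IsPentad Q})
      (fun Q (σ : Perm (Fin 5)) => ¬ RestrictsToOutcome F (pentadPlane (Q ∘ σ)))
      (fun Q hQ => ((mem_filter_univ Q).1 hQ).card_perm_not_restrictsToOutcome_ge F)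
      fun σ _ => by
        rw [bipartiteBelow, filter_filter]
        exact card_bad_pentads σ
  rw [card_univ, card_perm_fin_five] at double_count
  omega

theorem add_add_self_left {G : Type*} [AddCommGroup G] [Module F2 G] (x y : G) :
    x + (x + y) = y := by
  rw [← add_assoc, ZModModule.add_self, zero_add]

theorem isPentad_vecCons {x y p q : PV n} (hxy : symp x y = 0) (hxp : symp x p = 1)
    (hyp : symp y p = 1) (hpq : symp p q = 1) (hxq : symp x q = 1) (hyq : symp y q = 0) :
    IsPentad ![x, p, p + y, q, q + (x + y)] where
  symp_eq_one i j hij := by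
    wlog h : i < j generalizing i j
    · rw [symp_comm]
      exact this j i hij.symm (lt_of_le_of_ne (not_lt.1 h) hij.symm)
    fin_cases i <;> fin_cases j <;>
      simp_all [symp_add_left, symp_add_right, symp_self, symp_comm p x, symp_comm p y,
        symp_comm q x, symp_comm q y, symp_comm y x, CharTwo.add_self_eq_zero]
  sum_eq_zero := by
    simp only [Fin.sum_univ_five, Matrix.cons_val]
    calc
      x + p + (p + y) + q + (q + (x + y)) = x + x + (y + y) + (p + p) + (q + q) := by abel
      _ = 0 := by simp only [ZModModule.add_self]

theorem linearIndependent_vecCons_of_symp {x y p : PV n} (hxy : LinearIndependent F2 ![x, y])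
    (hsymp : symp x y = 0) (hp : symp x p = 1) : LinearIndependent F2 ![p, x, y] := by
  refine linearIndependent_finCons.2 ⟨hxy, fun hmem => ?_⟩
  have hperp : x ∈ perp (Submodule.span F2 (Set.range ![x, y])) := by
    rw [mem_perp_span, Matrix.range_cons_cons_empty]
    rintro z (rfl | rfl)
    exacts [symp_self z, symp_comm z x ▸ hsymp]
  rw [symp_comm, mem_perp.1 hperp p hmem] at hp
  exact zero_ne_one hp

theorem card_isPentad_of_linearIndependent {x y : PV n} (hxy : LinearIndependent F2 ![x, y])
    (hsymp : symp x y = 0) :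
    #{Q : Fin 5 → PV n | IsPentad Q ∧ Q 0 = x ∧ Q 1 + Q 2 = y}
      = 2 ^ (2 * n - 2) * 2 ^ (2 * n - 3) := by
  set P : Finset (PV n) := {p | symp x p = 1 ∧ symp y p = 1} with hP
  set R : PV n → Finset (PV n) := fun p => {q | symp p q = 1 ∧ symp x q = 1 ∧ symp y q = 0} with hR
  have card_P : #P = 2 ^ (2 * n - 2) := by
    rw [← card_symp_eq hxy ![1, 1]]
    simp only [hP, Fin.forall_fin_two, Matrix.cons_val]
  have card_R : ∀ p ∈ P, #(R p) = 2 ^ (2 * n - 3) := fun p hp => by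
    have hxp := ((mem_filter_univ p).1 hp).1
    rw [← card_symp_eq (linearIndependent_vecCons_of_symp hxy hsymp hxp) ![1, 1, 0]]
    simp [hR, Fin.forall_fin_succ]
  rw [← card_P, ← sum_const_nat card_R, ← card_sigma]
  refine card_nbij' (fun Q => ⟨Q 1, Q 3⟩)
    (fun pq => ![x, pq.1, pq.1 + y, pq.2, pq.2 + (x + y)]) ?_ ?_ ?_ ?_
  · intro Q hmem
    obtain ⟨hQ, rfl, rfl⟩ := (mem_filter_univ Q).1 hmem
    have hpair (i j) (hij : i ≠ j := by decide) := hQ.symp_eq_one i j hij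
    simp [hP, hR, symp_add_left, symp_self, hpair 0 1, hpair 2 1, hpair 0 3, hpair 1 3, hpair 2 3,
      CharTwo.add_self_eq_zero]
  · rintro ⟨p, q⟩ hpq
    simp only [mem_coe, mem_sigma, hP, hR, mem_filter_univ] at hpq
    obtain ⟨⟨hxp, hyp⟩, hpq, hxq, hyq⟩ := hpq
    exact (mem_filter_univ _).2 ⟨isPentad_vecCons hsymp hxp hyp hpq hxq hyq, rfl,
      add_add_self_left p y⟩
  · intro Q hmem
    obtain ⟨hQ, rfl, rfl⟩ := (mem_filter_univ Q).1 hmem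
    have h4 : Q 3 + (Q 0 + (Q 1 + Q 2)) = Q 4 := hQ.eq_of_add_eq_sum (by abel)
    funext i
    fin_cases i
    · rfl
    · rfl
    · exact add_add_self_left _ _
    · rfl
    · exact h4
  · exact fun _ _ => rfl

theorem card_pentadPlane_eq {t : Submodule F2 (PV n)} (ht : t ∈ Lset n 2) :
    #{Q : Fin 5 → PV n | IsPentad Q ∧ pentadPlane Q = t}
      = 6 * (2 ^ (2 * n - 2) * 2 ^ (2 * n - 3)) := by
  have card_bases : #{v : Fin 2 → PV n | .span F2 (Set.range v) = t} = 6 := by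
    rw [← Fintype.card_subtype, ← Nat.card_eq_fintype_card, natCard_span_range_eq ht.2, ZMod.card,
      Fin.prod_univ_two]
    rfl
  rw [← card_bases]
  refine (card_eq_sum_card_fiberwise (f := fun Q => ![Q 0, Q 1 + Q 2])
    (t := {v | .span F2 (Set.range v) = t}) ?_).trans (sum_const_nat fun v hv => ?_)
  · intro Q hQ
    rw [mem_coe, mem_filter_univ] at hQ ⊢
    exact hQ.2
  · rw [mem_filter_univ] at hv
    obtain ⟨x, y, rfl⟩ : ∃ x y, v = ![x, y] := ⟨v 0, v 1, (FinVec.etaExpand_eq v).symm⟩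
    obtain ⟨hmem, hxy⟩ := (span_range_eq_iff_of_finrank_eq ht.2).1 hv
    rw [← card_isPentad_of_linearIndependent hxy (ht.1 x (hmem 0) y (hmem 1)), filter_filter]
    congr 1
    refine filter_congr fun Q _ => ⟨?_, ?_⟩
    · exact fun ⟨⟨hQ, _⟩, h⟩ => ⟨hQ, congrFun h 0, congrFun h 1⟩
    · rintro ⟨hQ, rfl, rfl⟩
      exact ⟨⟨hQ, hv⟩, rfl⟩

theorem card_Lset_two_le (F : PV n → F2) :
    #{t | t ∈ Lset n 2} ≤ 5 * #{t | t ∈ Lset n 2 ∧ ¬ RestrictsToOutcome F t} := by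
  have hF := card_isPentad_le F
  rw [← filter_filter] at hF ⊢
  refine card_le_mul_card_filter_of_fiberwise (f := pentadPlane)
    (C := 6 * (2 ^ (2 * n - 2) * 2 ^ (2 * n - 3))) (by positivity) (fun Q hQ => ?_)
    (fun t ht => ?_) hF
  · rw [mem_filter_univ] at hQ ⊢
    exact hQ.pentadPlane_mem_Lset
  · rw [filter_filter]
    exact card_pentadPlane_eq ((mem_filter_univ t).1 ht)

end PentadCount

theorem card_compl_lagrangians_le {n : ℕ} (hn : n ≠ 2) (F : PV n → F2) :
    #(lagrangians n)ᶜ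
      ≤ 5 * #{y : BVtx n | y.1 ∈ Lset n 2 ∧ ¬ RestrictsToOutcome F y.1} := by
  have h := card_Lset_two_le (n := n) F
  simp only [← Fintype.card_subtype, ← Nat.card_eq_fintype_card] at h
  rw [card_vertices (fun _ => mem_lagrangians_compl hn) fun _ => Or.inr,
    card_vertices (p := fun t => t ∈ Lset n 2 ∧ ¬ RestrictsToOutcome F t) (by simp)
      fun _ ht => Or.inr ht.1]
  exact h

/-- **Spectral incompleteness bound.** For `n ≥ 3`, `Pval(L^n) ≤ 4·(λ/Δ)²` where `Δ` is the
largest eigenvalue and `λ` the spectral parameter of the adjacency matrix of `B_{n,2}`. -/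
theorem pval_le_spectral_bound :
    ∀ n : ℕ, 3 ≤ n →
      ∀ D ⊆ Lset n n,
        (∃ f : (S : Submodule F2 (PV n)) → (S → F2),
            (∀ S ∈ D, IsOutcome S (f S)) ∧
            (∀ S₁ ∈ D, ∀ S₂ ∈ D, ConsistentOn (f S₁) (f S₂))) →
        (Nat.card D : ℝ) / (Nat.card (Lset n n) : ℝ) ≤
          4 * (specParam (adjB n) / maxEig (adjB n)) ^ 2 := by
  intro n hn D hD ⟨f, hf, hcons⟩
  obtain ⟨F, hF⟩ := exists_restrictsToOutcome hf hcons
  obtain ⟨a, b, ha, hab⟩ := exists_isBiregularWith_graphB hn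
  have hn2 : n ≠ 2 := by omega
  set S : Finset (BVtx n) := {x | x.1 ∈ D}
  set T : Finset (BVtx n) := {y | y.1 ∈ Lset n 2 ∧ ¬ RestrictsToOutcome F y.1}
  have hSL : S ⊆ lagrangians n := fun x hx => mem_lagrangians.2 (hD ((mem_filter_univ x).1 hx))
  have hTL : T ⊆ (lagrangians n)ᶜ := fun y hy =>
    (mem_lagrangians_compl hn2).2 ((mem_filter_univ y).1 hy).1
  have no_edges : ∀ x ∈ S, ∀ y ∈ T, ¬ (graphB n).Adj x y := fun x hx y hy hxy =>
    ((mem_filter_univ y).1 hy).2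
      ((hF x.1 ((mem_filter_univ x).1 hx)).mono ((graphB_adj_iff hn2 (hSL hx)).1 hxy).2)
  have card_T : #(lagrangians n)ᶜ ≤ (4 + 1) * #T := card_compl_lagrangians_le hn2 F
  have card_S : #S = Nat.card D := card_vertices (p := (· ∈ D)) (by simp [S]) fun X hX =>
    Or.inl (hD hX)
  have card_L : #(lagrangians n) = Nat.card (Lset n n) :=
    card_vertices (p := (· ∈ Lset n n)) (fun _ => mem_lagrangians) fun _ => Or.inl
  rw [← card_S, ← card_L, ← adjMatrix_graphB]
  exact_mod_cast hab.card_div_card_le (preconnected_graphB hn) nonempty_lagrangians ha hSL hTL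
    no_edges card_T
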